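/- Assume C is an n×n nonnegative irreducible matrix and g is an admissible weight function. Then the map u_g : Σ → Σ has at least one fixed point in int(Σ), and moreover every fixed point of u_g lies in int(Σ). -/

import Mathlib

open Set Matrix

/-- An admissible weight function. -/
def IsAdmissible (g g' : ℝ → ℝ) : Prop :=
  (∀ x ∈ Set.Icc (0:ℝ) 1, HasDerivWithinAt g (g' x) (Set.Icc (0:ℝ) 1) x) ∧
  ContinuousOn g' (Set.Icc (0:ℝ) 1) ∧
  g 0 = 1 ∧
  (∀ x ∈ Set.Icc (0:ℝ) 1, 0 < g x) ∧
  (∀ x ∈ Set.Icc (0:ℝ) 1, 0 < g' x)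

/-- `C` is irreducible. -/
def IsIrred {n : ℕ} (C : Matrix (Fin n) (Fin n) ℝ) : Prop :=
  ∀ i j : Fin n, ∃ m : ℕ, 0 < m ∧ 0 < (C ^ m) i j

/-- The stochastic matrix `M_g(x)`. -/
noncomputable def Mg {n : ℕ} (C : Matrix (Fin n) (Fin n) ℝ) (g : ℝ → ℝ)
    (x : Fin n → ℝ) : Matrix (Fin n) (Fin n) ℝ :=
  Matrix.of fun i j => C i j * g (x j) / ∑ k, C i k * g (x k)

/-!
A fixed point of `x ↦ x ᵥ* M_g(x)` is a fixed point of `u_g`, and Brouwer's theorem provides one.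
An irreducible nonnegative matrix has only strictly positive nonzero nonnegative invariant vectors,
because the positivity of one entry spreads along the edges of its graph; this puts every fixed
point in the interior.

Brouwer's theorem is obtained from Scarf's combinatorial lemma. The points of a fine net in the
simplex, together with one slack element for each corner, are ordered by each coordinate. If they
are coloured so that each slack element has its own colour, the parity argument of Sperner's lemma
yields a dominant set with all colours, and dominance forces its net points to be close together.
Colouring `x` by an `i` with `x i ≤ F x i` and refining the net gives a point with `x ≤ F x`.
-/

open scoped Finset

section Counting

variable {α β : Type*} [DecidableEq α] [DecidableEq β]

theorem card_filter_image_erase_eq_two {s : Finset α} {f : α → β} (h : #(s.image f) + 1 = #s) :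
    #{a ∈ s | (s.erase a).image f = s.image f} = 2 := by
  obtain ⟨a, ha, b, hb, hab, hfab⟩ :=
    Finset.exists_ne_map_eq_of_card_image_lt (show #(s.image f) < #s by omega)
  refine Finset.card_eq_two.2 ⟨a, b, hab, ?_⟩
  have image_erase {x y : α} (hy : y ∈ s) (hyx : y ≠ x) (hxy : f x = f y) :
      (s.erase x).image f = s.image f := by
    grind
  ext x
  simp only [Finset.mem_filter, Finset.mem_insert, Finset.mem_singleton]
  constructor
  · rintro ⟨hx, himage⟩
    have hinj : Set.InjOn f (s.erase x) := by
      rw [← Finset.card_image_iff, himage, Finset.card_erase_of_mem hx]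
      omega
    by_contra! hxab
    exact hab (hinj (Finset.mem_coe.2 (Finset.mem_erase.2 ⟨hxab.1.symm, ha⟩))
      (Finset.mem_coe.2 (Finset.mem_erase.2 ⟨hxab.2.symm, hb⟩)) hfab)
  · rintro (rfl | rfl)
    · exact ⟨ha, image_erase hb hab.symm hfab⟩
    · exact ⟨hb, image_erase ha hab hfab.symm⟩

theorem sum_card_filter_insert_mem_eq_sum_card_filter_erase_mem [Fintype α]
    (doors rooms : Finset (Finset α)) :
    ∑ T ∈ doors, #{x | x ∉ T ∧ insert x T ∈ rooms} =
      ∑ S ∈ rooms, #{x ∈ S | S.erase x ∈ doors} := by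
  simp only [← Finset.card_sigma]
  refine Finset.card_nbij' (fun p ↦ ⟨insert p.2 p.1, p.2⟩) (fun p ↦ ⟨p.1.erase p.2, p.2⟩)
    ?_ ?_ ?_ ?_ <;> rintro ⟨S, x⟩ <;> simp +contextual

end Counting

section Sperner

variable {I V : Type*} [Fintype I] [Fintype V] [DecidableEq I] [DecidableEq V]

/-- Doors are the sets with exactly the colours other than `i₀`. A room without all colours has
either no door or two, so the number of sides of doors that open into such rooms is even. -/
theorem exists_image_eq_univ_of_existsUnique_odd {rooms : Finset (Finset V)}
    (hrooms : ∀ S ∈ rooms, #S = Fintype.card I) {c : V → I} {i₀ : I}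
    (h : ∃! T : Finset V,
      T.image c = Finset.univ.erase i₀ ∧ Odd #{x | x ∉ T ∧ insert x T ∈ rooms}) :
    ∃ S ∈ rooms, S.image c = Finset.univ := by
  by_contra! hrainbow
  let doors : Finset (Finset V) := {T | T.image c = Finset.univ.erase i₀}
  have hodd : Odd (∑ T ∈ doors, #{x | x ∉ T ∧ insert x T ∈ rooms}) := by
    obtain ⟨T₀, hT₀, hunique⟩ := h
    have : {T ∈ doors | Odd #{x | x ∉ T ∧ insert x T ∈ rooms}} = {T₀} := by
      ext T
      simp only [doors, Finset.mem_filter, Finset.mem_univ, true_and, Finset.mem_singleton]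
      exact ⟨hunique T, fun hT ↦ hT ▸ hT₀⟩
    rw [Finset.odd_sum_iff_odd_card_odd, this, Finset.card_singleton]
    exact odd_one
  have heven : Even (∑ S ∈ rooms, #{x ∈ S | S.erase x ∈ doors}) := by
    refine Finset.even_sum _ fun S hS ↦ ?_
    by_cases himage : S.image c = Finset.univ.erase i₀
    · have hcard : #(S.image c) + 1 = #S := by
        rw [himage, hrooms S hS, Finset.card_erase_add_one (Finset.mem_univ i₀), Finset.card_univ]
      have := card_filter_image_erase_eq_two hcard
      simp only [himage] at this
      simp only [doors, Finset.mem_filter_univ, this, even_two]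
    · have hempty : ∀ x ∈ S, S.erase x ∉ doors := by
        intro x _ hx
        have hsub : Finset.univ.erase i₀ ⊆ S.image c := by
          rw [← (Finset.mem_filter_univ _).1 hx]
          exact Finset.image_mono c (Finset.erase_subset x S)
        have := hrainbow S hS
        grind
      rw [Finset.filter_false_of_mem hempty, Finset.card_empty]
      exact Even.zero
  rw [sum_card_filter_insert_mem_eq_sum_card_filter_erase_mem] at hodd
  exact Nat.not_even_iff_odd.2 hodd heven

end Sperner

section Scarf

variable {I V α : Type*} [LinearOrder α] {r : I → V → α} {e : I → V}

/-- Scarf's dominant sets: no element of `V` exceeds all of `S` in every one of the orders `r i`.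
For suitable orders on the points of a fine net in a simplex they play the role of the faces of a
triangulation. -/
def IsDominant (r : I → V → α) (S : Finset V) : Prop :=
  ∀ v, ∃ i, ∀ s ∈ S, r i v ≤ r i s

/-- Scarf's slack vectors: `e i` is the strictly least element of the order `r i` and lies above
every non-slack element in all the other orders. They play the role of the corners of the
simplex. -/
structure IsSlack (r : I → V → α) (e : I → V) : Prop where
  lt_of_ne {i : I} {v : V} : v ≠ e i → r i (e i) < r i v
  lt_of_notMem_range {i j : I} {v : V} : v ∉ Set.range e → i ≠ j → r i v < r i (e j)

/-- `m` picks, for each of the orders `r i`, a least element `m i` of `T`. -/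
def IsArgmin (r : I → V → α) (T : Finset V) (m : I → V) : Prop :=
  ∀ i, m i ∈ T ∧ ∀ s ∈ T, r i (m i) ≤ r i s

/-- The elements exceeding `m l` in each order `r l` except possibly `r k`. When `m` picks the least
elements of a dominant set, the greatest such element in the order `r k` is the one by which Scarf's
pivoting step enlarges that set. -/
def aboveExcept (r : I → V → α) (m : I → V) (k : I) : Set V :=
  {x | ∀ l ≠ k, r l (m l) < r l x}

theorem IsDominant.anti {S T : Finset V} (hS : IsDominant r S) (hTS : T ⊆ S) : IsDominant r T :=
  fun v ↦ (hS v).imp fun _ hi s hs ↦ hi s (hTS hs)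

theorem exists_isArgmin (r : I → V → α) {T : Finset V} (hT : T.Nonempty) :
    ∃ m, IsArgmin r T m := by
  choose m hm using fun i ↦ T.exists_min_image (r i) hT
  exact ⟨m, hm⟩

variable {T : Finset V} {m : I → V} {x : V} {k : I}

theorem IsArgmin.eq_of_mem_aboveExcept (hm : IsArgmin r T m) (hx : x ∈ aboveExcept r m k) {i : I}
    (hi : ∀ s ∈ T, r i x ≤ r i s) : i = k :=
  not_imp_comm.1 (hx i) (hi _ (hm i).1).not_gt

theorem IsDominant.eq_of_mem_aboveExcept (hT : IsDominant r T) (hm : IsArgmin r T m) {l : I}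
    (hk : x ∈ aboveExcept r m k) (hl : x ∈ aboveExcept r m l) : k = l := by
  obtain ⟨i, hi⟩ := hT x
  exact (hm.eq_of_mem_aboveExcept hk hi).symm.trans (hm.eq_of_mem_aboveExcept hl hi)

theorem IsSlack.mem_aboveExcept (he : IsSlack r e) (hm : IsArgmin r T m) (hx : x ∈ T)
    (hxe : x ∉ Set.range e) (k : I) : e k ∈ aboveExcept r m k :=
  fun l hl ↦ ((hm l).2 x hx).trans_lt (he.lt_of_notMem_range hxe hl)

variable [DecidableEq V]

theorem IsDominant.insert_iff_of_mem_aboveExcept (hT : IsDominant r T) (hm : IsArgmin r T m)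
    (hx : x ∈ aboveExcept r m k) :
    IsDominant r (insert x T) ↔ ∀ y ∈ aboveExcept r m k, r k y ≤ r k x := by
  simp only [IsDominant, Finset.forall_mem_insert]
  refine ⟨fun h y hy ↦ ?_, fun h v ↦ ?_⟩
  · obtain ⟨i, hix, hiT⟩ := h y
    exact hm.eq_of_mem_aboveExcept hy hiT ▸ hix
  · by_cases hv : v ∈ aboveExcept r m k
    · obtain ⟨i, hi⟩ := hT v
      exact ⟨k, h v hv, hm.eq_of_mem_aboveExcept hv hi ▸ hi⟩
    · obtain ⟨l, hlk, hl⟩ : ∃ l ≠ k, r l v ≤ r l (m l) := by simpa [aboveExcept] using hv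
      exact ⟨l, hl.trans (hx l hlk).le, fun s hs ↦ hl.trans ((hm l).2 s hs)⟩

variable [Fintype I]

theorem IsDominant.image_eq (hT : IsDominant r T) (hr : ∀ i, Function.Injective (r i))
    (hm : IsArgmin r T m) : Finset.univ.image m = T := by
  refine (Finset.image_subset_iff.2 fun i _ ↦ (hm i).1).antisymm fun t ht ↦ ?_
  obtain ⟨i, hi⟩ := hT t
  have : m i = t := hr i (((hm i).2 t ht).antisymm (hi (m i) (hm i).1))
  exact Finset.mem_image.2 ⟨i, Finset.mem_univ i, this⟩

variable [DecidableEq I]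

theorem notMem_of_mem_aboveExcept (hT : (Finset.univ.erase k).image m = T)
    (hx : x ∈ aboveExcept r m k) : x ∉ T := by
  rw [← hT, Finset.mem_image]
  rintro ⟨l, hl, rfl⟩
  exact (hx l (Finset.ne_of_mem_erase hl)).false

theorem IsDominant.exists_mem_aboveExcept_of_insert (hr : ∀ i, Function.Injective (r i))
    (hm : IsArgmin r T m) (hcard : #T + 1 = Fintype.card I) (hx : x ∉ T)
    (hdom : IsDominant r (insert x T)) :
    ∃ k, (Finset.univ.erase k).image m = T ∧ x ∈ aboveExcept r m k := by
  obtain ⟨m', hm'⟩ := exists_isArgmin r (Finset.insert_nonempty x T)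
  have himage := hdom.image_eq hr hm'
  have hinj : Function.Injective m' := by
    refine Set.injOn_univ.1 (Finset.coe_univ (α := I) ▸ Finset.card_image_iff.1 ?_)
    rw [himage, Finset.card_insert_of_notMem hx, hcard, Finset.card_univ]
  obtain ⟨k, -, hk⟩ := Finset.mem_image.1 (himage ▸ Finset.mem_insert_self x T)
  have heq : ∀ l ≠ k, m' l = m l := fun l hl ↦ by
    have : m' l ∈ T := Finset.mem_of_mem_insert_of_ne (hm' l).1 (hk ▸ hinj.ne hl)
    exact hr l (((hm' l).2 _ (Finset.mem_insert_of_mem (hm l).1)).antisymm ((hm l).2 _ this))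
  refine ⟨k, ?_, fun l hl ↦ ?_⟩
  · rw [Finset.image_congr fun l hl ↦ (heq l (Finset.ne_of_mem_erase hl)).symm,
      Finset.image_erase hinj, himage, hk, Finset.erase_insert hx]
  · rw [← heq l hl]
    exact ((hm' l).2 x (Finset.mem_insert_self x T)).lt_of_ne ((hr l).ne (hk ▸ hinj.ne hl))

theorem IsSlack.isDominant_insert_image_erase_iff (he : IsSlack r e)
    (hx : x ∉ (Finset.univ.erase k).image e) :
    IsDominant r (insert x ((Finset.univ.erase k).image e)) ↔
      ∀ v ∉ (Finset.univ.erase k).image e, r k v ≤ r k x := by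
  have le_slack (i : I) (v : V) : r i (e i) ≤ r i v := by
    by_cases hv : v = e i
    exacts [hv ▸ le_rfl, (he.lt_of_ne hv).le]
  simp only [IsDominant, Finset.forall_mem_insert, Finset.forall_mem_image, Finset.mem_erase,
    Finset.mem_univ, and_true]
  refine ⟨fun h v hv ↦ ?_, fun h v ↦ ?_⟩
  · obtain ⟨i, hix, hie⟩ := h v
    obtain rfl : i = k := by
      by_contra hik
      have : v = e i := not_imp_comm.1 he.lt_of_ne (hie hik).not_gt
      exact hv (Finset.mem_image.2 ⟨i, by simpa using hik, this.symm⟩)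
    exact hix
  · by_cases hv : v ∈ (Finset.univ.erase k).image e
    · obtain ⟨l, -, rfl⟩ := Finset.mem_image.1 hv
      exact ⟨l, le_slack l x, fun i _ ↦ le_slack l (e i)⟩
    · refine ⟨k, h v hv, fun i hik ↦ ?_⟩
      by_cases hve : v ∈ Set.range e
      · obtain ⟨l, rfl⟩ := hve
        have : l = k := by
          by_contra hlk
          exact hv (Finset.mem_image_of_mem e (by simpa using hlk))
        exact this ▸ le_slack l _
      · exact (he.lt_of_notMem_range hve (Ne.symm hik)).le

variable [Fintype V]

open scoped Classical in
theorem IsSlack.card_filter_insert_image_erase_eq_one (he : IsSlack r e)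
    (hr : ∀ i, Function.Injective (r i)) (hinj : Function.Injective e) (k : I) :
    #{x | x ∉ (Finset.univ.erase k).image e ∧
      IsDominant r (insert x ((Finset.univ.erase k).image e))} = 1 := by
  have hk : e k ∉ (Finset.univ.erase k).image e := by simp [hinj.eq_iff]
  obtain ⟨x, hx, hmax⟩ := Set.exists_max_image {v | v ∉ (Finset.univ.erase k).image e} (r k)
    (Set.toFinite _) ⟨e k, hk⟩
  refine Finset.card_eq_one.2 ⟨x, Finset.eq_singleton_iff_unique_mem.2 ⟨?_, fun y hy ↦ ?_⟩⟩
  · exact (Finset.mem_filter_univ x).2 ⟨hx, (he.isDominant_insert_image_erase_iff hx).2 hmax⟩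
  · obtain ⟨hy, hdom⟩ := (Finset.mem_filter_univ y).1 hy
    exact hr k ((hmax y hy).antisymm ((he.isDominant_insert_image_erase_iff hy).1 hdom x hx))

end Scarf

section ScarfLemma

variable {I V α : Type*} [LinearOrder α] [Fintype I] {r : I → V → α} {e : I → V}

section Parity

variable [Fintype V] [DecidableEq V] {T : Finset V} {m : I → V}

open scoped Classical in
/-- As `#T = card I - 1`, exactly two of the orders share their least element in `T`. Each of the
two can be freed from it to admit one new element. -/
theorem IsDominant.card_filter_insert_eq_two (hT : IsDominant r T)
    (hr : ∀ i, Function.Injective (r i)) (hm : IsArgmin r T m)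
    (hcard : #T + 1 = Fintype.card I) (habove : ∀ k, (aboveExcept r m k).Nonempty) :
    #{x | x ∉ T ∧ IsDominant r (insert x T)} = 2 := by
  have himage := hT.image_eq hr hm
  choose top htop hmax using fun k ↦
    Set.exists_max_image (aboveExcept r m k) (r k) (Set.toFinite _) (habove k)
  have hfree : #{k | (Finset.univ.erase k).image m = T} = 2 := by
    rw [← himage]
    exact card_filter_image_erase_eq_two (by rw [himage, hcard, Finset.card_univ])
  rw [← hfree]
  refine (Finset.card_nbij top (fun k hk ↦ ?_) (fun k _ l _ hkl ↦ ?_) fun x hx ↦ ?_).symm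
  · have hk := (Finset.mem_filter_univ k).1 hk
    exact (Finset.mem_filter_univ _).2 ⟨notMem_of_mem_aboveExcept hk (htop k),
      (hT.insert_iff_of_mem_aboveExcept hm (htop k)).2 (hmax k)⟩
  · exact hT.eq_of_mem_aboveExcept hm (htop k) (hkl ▸ htop l)
  · obtain ⟨hxT, hdom⟩ := (Finset.mem_filter_univ x).1 hx
    obtain ⟨k, hk, hxk⟩ := hdom.exists_mem_aboveExcept_of_insert hr hm hcard hxT
    have hxmax := (hT.insert_iff_of_mem_aboveExcept hm hxk).1 hdom
    exact ⟨k, (Finset.mem_filter_univ k).2 hk, hr k ((hxmax _ (htop k)).antisymm (hmax k x hxk))⟩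

open scoped Classical in
theorem IsSlack.subset_range_of_odd (he : IsSlack r e) (hr : ∀ i, Function.Injective (r i))
    (hcard : #T + 1 = Fintype.card I)
    (hodd : Odd #{x | x ∉ T ∧ IsDominant r (insert x T)}) : ↑T ⊆ Set.range e := by
  by_contra hT
  obtain ⟨y, hyT, hye⟩ := Set.not_subset.1 hT
  obtain ⟨x, hx⟩ := Finset.card_pos.1 hodd.pos
  have hdom := ((Finset.mem_filter_univ x).1 hx).2.anti (Finset.subset_insert x T)
  obtain ⟨m, hm⟩ := exists_isArgmin r ⟨y, hyT⟩
  rw [hdom.card_filter_insert_eq_two hr hm hcard fun k ↦ ⟨e k, he.mem_aboveExcept hm hyT hye k⟩]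
    at hodd
  exact Nat.not_odd_iff_even.2 even_two hodd

end Parity

variable [Finite V] [DecidableEq I] [Nonempty I]

theorem IsSlack.exists_isDominant_image_eq_univ_of_injective (he : IsSlack r e)
    (hr : ∀ i, Function.Injective (r i)) {c : V → I} (hc : Function.LeftInverse c e) :
    ∃ S, IsDominant r S ∧ S.image c = Finset.univ := by
  classical
  cases nonempty_fintype V
  obtain ⟨i₀⟩ := ‹Nonempty I›
  let rooms : Finset (Finset V) := {S | #S = Fintype.card I ∧ IsDominant r S}
  have mem_rooms : ∀ S, S ∈ rooms ↔ #S = Fintype.card I ∧ IsDominant r S :=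
    fun S ↦ Finset.mem_filter_univ S
  have card_rooms {T : Finset V} (hT : #T + 1 = Fintype.card I) :
      #{x | x ∉ T ∧ insert x T ∈ rooms} = #{x | x ∉ T ∧ IsDominant r (insert x T)} := by
    congr 1
    ext x
    simp +contextual [mem_rooms, Finset.card_insert_of_notMem, hT]
  obtain ⟨S, hS, hSc⟩ : ∃ S ∈ rooms, S.image c = Finset.univ := by
    refine exists_image_eq_univ_of_existsUnique_odd (fun S hS ↦ ((mem_rooms S).1 hS).1) (i₀ := i₀)
      ⟨(Finset.univ.erase i₀).image e, ⟨?_, ?_⟩, fun T ⟨hTc, hodd⟩ ↦ ?_⟩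
    · rw [Finset.image_image, hc.comp_eq_id, Finset.image_id]
    · have hcard : #((Finset.univ.erase i₀).image e) + 1 = Fintype.card I := by
        rw [Finset.card_image_of_injective _ hc.injective,
          Finset.card_erase_add_one (Finset.mem_univ i₀), Finset.card_univ]
      rw [card_rooms hcard, he.card_filter_insert_image_erase_eq_one hr hc.injective]
      exact odd_one
    · obtain ⟨x, hx⟩ := Finset.card_pos.1 hodd.pos
      obtain ⟨hxT, hroom⟩ := (Finset.mem_filter_univ x).1 hx
      have hcard : #T + 1 = Fintype.card I := by
        rw [← Finset.card_insert_of_notMem hxT, ((mem_rooms _).1 hroom).1]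
      have hslack := he.subset_range_of_odd hr hcard (card_rooms hcard ▸ hodd)
      rw [← hTc, ← Finset.coe_inj, Finset.coe_image, Finset.coe_image,
        (hc.rightInvOn_range.mono hslack).image_image]
  exact ⟨S, ((mem_rooms S).1 hS).2, hSc⟩

/-- Scarf's lemma. Ties in the orders are broken by an arbitrary enumeration of `V`. -/
theorem IsSlack.exists_isDominant_image_eq_univ (he : IsSlack r e)
    {c : V → I} (hc : Function.LeftInverse c e) :
    ∃ S, IsDominant r S ∧ S.image c = Finset.univ := by
  let r' (i : I) (v : V) : α ×ₗ Fin (Nat.card V) := toLex (r i v, Finite.equivFin V v)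
  have lt_of_lt {i : I} {v w : V} (h : r i v < r i w) : r' i v < r' i w :=
    Prod.Lex.toLex_lt_toLex.2 (Or.inl h)
  have he' : IsSlack r' e :=
    ⟨fun hv ↦ lt_of_lt (he.lt_of_ne hv), fun hv hij ↦ lt_of_lt (he.lt_of_notMem_range hv hij)⟩
  have hr' (i : I) : Function.Injective (r' i) := fun v w hvw ↦
    (Finite.equivFin V).injective (Prod.ext_iff.1 (toLex.injective hvw)).2
  obtain ⟨S, hdom, hS⟩ := he'.exists_isDominant_image_eq_univ_of_injective hr' hc
  refine ⟨S, fun v ↦ (hdom v).imp fun i hi s hs ↦ ?_, hS⟩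
  exact (Prod.Lex.toLex_le_toLex'.1 (hi s hs)).1

end ScarfLemma

section Brouwer

variable {ι : Type*} [Fintype ι]

section Net

variable {t : Set (ι → ℝ)} {δ : ℝ}

theorem exists_mem_forall_lt_of_sum_add_le_one [Nonempty ι]
    (hnet : ∀ y ∈ stdSimplex ℝ ι, ∃ z ∈ t, dist y z < δ) {μ : ι → ℝ} (hμ : 0 ≤ μ)
    (hsum : ∑ i, μ i + Fintype.card ι * δ ≤ 1) : ∃ z ∈ t, ∀ i, μ i < z i := by
  have hcard : (0 : ℝ) < Fintype.card ι := Nat.cast_pos.2 Fintype.card_pos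
  obtain ⟨η, hη⟩ : ∃ η, ∑ i, μ i + Fintype.card ι * η = 1 :=
    ⟨(1 - ∑ i, μ i) / Fintype.card ι, by field_simp; ring⟩
  have hδη : δ ≤ η := le_of_mul_le_mul_left (by linarith) hcard
  have hδ : 0 < δ := by
    classical
    obtain ⟨z, -, hz⟩ := hnet _ (single_mem_stdSimplex ℝ (Classical.arbitrary ι))
    exact dist_nonneg.trans_lt hz
  have hy : (fun i ↦ μ i + η) ∈ stdSimplex ℝ ι :=
    ⟨fun i ↦ add_nonneg (hμ i) (hδ.le.trans hδη), by simpa [Finset.sum_add_distrib] using hη⟩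
  obtain ⟨z, hz, hdist⟩ := hnet _ hy
  refine ⟨z, hz, fun i ↦ ?_⟩
  have := (abs_sub_lt_iff.1 ((Real.dist_eq _ _).symm.trans_lt
    ((dist_le_pi_dist _ z i).trans_lt hdist))).1
  linarith

variable [DecidableEq ι]

/-- The `i`th coordinate on the points of a net `t`, extended to slack elements `Sum.inr j` so that
the `i`th one lies below and the other ones lie above all points of the standard simplex. -/
def slackCoord (t : Set (ι → ℝ)) (i : ι) : t ⊕ ι → ℝ :=
  Sum.elim (fun x ↦ x.1 i) fun j ↦ if i = j then -1 else 2

theorem isSlack_slackCoord (ht : t ⊆ stdSimplex ℝ ι) : IsSlack (slackCoord t) Sum.inr where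
  lt_of_ne {i v} hv := by
    obtain x | j := v
    · have := (ht x.2).1 i
      simp only [slackCoord, Sum.elim_inl, Sum.elim_inr, if_true]
      linarith
    · have hij : i ≠ j := fun h ↦ hv (h ▸ rfl)
      simp only [slackCoord, Sum.elim_inr, if_true, if_neg hij]
      norm_num
  lt_of_notMem_range {i j v} hv hij := by
    obtain x | k := v
    · have := (mem_Icc_of_mem_stdSimplex (ht x.2) i).2
      simp only [slackCoord, Sum.elim_inl, Sum.elim_inr, if_neg hij]
      linarith
    · exact (hv ⟨k, rfl⟩).elim

/-- If the least values over `S` of the coordinates had too small a sum, a net point would exceed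
all of `S` in every coordinate. -/
theorem IsDominant.le_max_slackCoord_add (ht : t ⊆ stdSimplex ℝ ι)
    (hnet : ∀ y ∈ stdSimplex ℝ ι, ∃ z ∈ t, dist y z < δ) {S : Finset (t ⊕ ι)}
    (hS : IsDominant (slackCoord t) S) {x : t} (hx : Sum.inl x ∈ S) {v : t ⊕ ι} (hv : v ∈ S)
    (i : ι) :
    x.1 i ≤ max (slackCoord t i v) 0 + Fintype.card ι * δ := by
  have : Nonempty ι := ⟨i⟩
  let μ : ι → ℝ := fun l ↦ S.inf' ⟨v, hv⟩ fun s ↦ max (slackCoord t l s) 0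
  have hμ_le (l : ι) {s : t ⊕ ι} (hs : s ∈ S) : μ l ≤ max (slackCoord t l s) 0 :=
    Finset.inf'_le _ hs
  have hsum : 1 < ∑ l, μ l + Fintype.card ι * δ := by
    by_contra! hle
    obtain ⟨z, hz, hlt⟩ := exists_mem_forall_lt_of_sum_add_le_one hnet
      (fun l ↦ Finset.le_inf' _ _ fun s _ ↦ le_max_right _ _) hle
    obtain ⟨l, hl⟩ := hS (Sum.inl ⟨z, hz⟩)
    exact (hlt l).not_ge (Finset.le_inf' _ _ fun s hs ↦ (hl s hs).trans (le_max_left _ _))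
  have hxΔ := ht x.2
  have hμx (l : ι) : μ l ≤ x.1 l := (hμ_le l hx).trans (max_le le_rfl (hxΔ.1 l))
  have hdiff : x.1 i - μ i ≤ ∑ l, (x.1 l - μ l) :=
    Finset.single_le_sum (fun l _ ↦ sub_nonneg.2 (hμx l)) (Finset.mem_univ i)
  rw [Finset.sum_sub_distrib, hxΔ.2] at hdiff
  linarith [hμ_le i hv]

theorem IsDominant.exists_inl_mem (ht : t ⊆ stdSimplex ℝ ι) (hne : t.Nonempty)
    {S : Finset (t ⊕ ι)} (hS : IsDominant (slackCoord t) S) {c : t → ι}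
    (hc : S.image (Sum.elim c id) = Finset.univ) : ∃ x, Sum.inl x ∈ S := by
  obtain ⟨z, hz⟩ := hne
  obtain ⟨i, hi⟩ := hS (Sum.inl ⟨z, hz⟩)
  obtain ⟨s | j, hs, hsc⟩ := Finset.mem_image.1 (hc ▸ Finset.mem_univ i)
  · exact ⟨s, hs⟩
  · obtain rfl : j = i := hsc
    have : z j ≤ -1 := by simpa [slackCoord] using hi _ hs
    linarith [(ht hz).1 j]

end Net

theorem exists_mem_stdSimplex_forall_le_or_exists_dist_le [Nonempty ι] (c : (ι → ℝ) → ι) {ε : ℝ}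
    (hε : 0 < ε) :
    ∃ x ∈ stdSimplex ℝ ι, ∀ i, x i ≤ ε ∨ ∃ y ∈ stdSimplex ℝ ι, c y = i ∧ dist x y ≤ ε := by
  classical
  have hcard : (0 : ℝ) < Fintype.card ι := Nat.cast_pos.2 Fintype.card_pos
  obtain ⟨t, ht, hfin, hcover⟩ :=
    (isCompact_stdSimplex ℝ ι).finite_cover_balls (div_pos hε hcard)
  have := hfin.to_subtype
  have hnet : ∀ y ∈ stdSimplex ℝ ι, ∃ z ∈ t, dist y z < ε / Fintype.card ι := fun y hy ↦ by
    simpa using hcover hy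
  obtain ⟨z, hz, -⟩ := hnet _ (single_mem_stdSimplex ℝ (Classical.arbitrary ι))
  obtain ⟨S, hdom, hS⟩ := (isSlack_slackCoord ht).exists_isDominant_image_eq_univ
    (c := Sum.elim (fun x ↦ c x) id) fun _ ↦ rfl
  have le_add {x : t} (hx : Sum.inl x ∈ S) {v : t ⊕ ι} (hv : v ∈ S) (i : ι) :
      x.1 i ≤ max (slackCoord t i v) 0 + ε := by
    simpa only [mul_div_cancel₀ ε hcard.ne'] using hdom.le_max_slackCoord_add ht hnet hx hv i
  obtain ⟨x, hx⟩ := hdom.exists_inl_mem ht ⟨z, hz⟩ hS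
  refine ⟨x, ht x.2, fun i ↦ ?_⟩
  obtain ⟨y | j, hs, hsc⟩ := Finset.mem_image.1 (hS ▸ Finset.mem_univ i)
  · refine Or.inr ⟨y, ht y.2, hsc, (dist_pi_le_iff hε.le).2 fun k ↦ ?_⟩
    have hxy := le_add hx hs k
    have hyx := le_add hs hx k
    simp only [slackCoord, Sum.elim_inl, max_eq_left ((ht (Subtype.prop _)).1 k)] at hxy hyx
    rw [Real.dist_eq, abs_sub_le_iff]
    constructor <;> linarith
  · obtain rfl : j = i := hsc
    exact Or.inl (by simpa [slackCoord] using le_add hx hs j)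

theorem exists_mem_stdSimplex_forall_eq_zero_or_mem [Nonempty ι] {A : ι → Set (ι → ℝ)}
    (hA : ∀ i, IsClosed (A i)) (hcover : stdSimplex ℝ ι ⊆ ⋃ i, A i) :
    ∃ x ∈ stdSimplex ℝ ι, ∀ i, x i = 0 ∨ x ∈ A i := by
  classical
  by_contra! h
  let U (i : ι) : Set (ι → ℝ) := {x | x i ≠ 0} ∩ (A i)ᶜ
  have hU (i : ι) : IsOpen (U i) :=
    (isOpen_ne.preimage (continuous_apply i)).inter (hA i).isOpen_compl
  obtain ⟨δ, hδ, hball⟩ := lebesgue_number_lemma_of_metric (isCompact_stdSimplex ℝ ι) hU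
    fun x hx ↦ Set.mem_iUnion.2 (h x hx)
  choose! c hc using show ∀ x ∈ stdSimplex ℝ ι, ∃ i, x ∈ A i from
    fun x hx ↦ Set.mem_iUnion.1 (hcover hx)
  obtain ⟨x, hx, happrox⟩ := exists_mem_stdSimplex_forall_le_or_exists_dist_le c (half_pos hδ)
  obtain ⟨i, hi⟩ := hball x hx
  obtain hxi | ⟨y, hy, rfl, hxy⟩ := happrox i
  · have hmem : Function.update x i 0 ∈ Metric.ball x δ := by
      refine (dist_pi_lt_iff hδ).2 fun k ↦ ?_
      obtain rfl | hk := eq_or_ne k i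
      · rw [Function.update_self, dist_zero_left, Real.norm_of_nonneg (hx.1 k)]
        linarith
      · rwa [Function.update_of_ne hk, dist_self]
    exact (hi hmem).1 (Function.update_self i 0 x)
  · have hmem : y ∈ Metric.ball x δ := by
      rw [Metric.mem_ball, dist_comm]
      linarith
    exact (hi hmem).2 (hc y hy)

theorem exists_mem_stdSimplex_isFixedPt [Nonempty ι] {F : (ι → ℝ) → ι → ℝ}
    (hF : ContinuousOn F (stdSimplex ℝ ι))
    (hmaps : Set.MapsTo F (stdSimplex ℝ ι) (stdSimplex ℝ ι)) :
    ∃ x ∈ stdSimplex ℝ ι, Function.IsFixedPt F x := by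
  have hclosed (i : ι) : IsClosed {x ∈ stdSimplex ℝ ι | x i ≤ F x i} :=
    (isClosed_stdSimplex ℝ ι).isClosed_le (continuous_apply i).continuousOn
      ((continuous_apply i).comp_continuousOn hF)
  have hcover : stdSimplex ℝ ι ⊆ ⋃ i, {x ∈ stdSimplex ℝ ι | x i ≤ F x i} := by
    intro x hx
    obtain ⟨i, -, hi⟩ : ∃ i ∈ Finset.univ, x i ≤ F x i :=
      Finset.exists_le_of_sum_le Finset.univ_nonempty (hx.2.trans (hmaps hx).2.symm).le
    exact Set.mem_iUnion.2 ⟨i, hx, hi⟩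
  obtain ⟨x, hx, h⟩ := exists_mem_stdSimplex_forall_eq_zero_or_mem hclosed hcover
  have hle : ∀ i ∈ Finset.univ, x i ≤ F x i := fun i _ ↦
    (h i).elim (fun h0 ↦ h0.trans_le ((hmaps hx).1 i)) And.right
  have heq := (Finset.sum_eq_sum_iff_of_le hle).1 (hx.2.trans (hmaps hx).2.symm)
  exact ⟨x, hx, funext fun i ↦ (heq i (Finset.mem_univ i)).symm⟩

end Brouwer

section Stochastic

variable {ι R : Type*} [Fintype ι] [DecidableEq ι]

theorem vecMul_mem_stdSimplex [Semiring R] [PartialOrder R] [IsOrderedRing R] {P : Matrix ι ι R}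
    (hP : P ∈ rowStochastic R ι) {v : ι → R} (hv : v ∈ stdSimplex R ι) :
    v ᵥ* P ∈ stdSimplex R ι := by
  refine ⟨nonneg_vecMul_of_mem_rowStochastic hP hv.1, ?_⟩
  rw [← dotProduct_one]
  exact vecMul_dotProduct_one_eq_one_rowStochastic hP ((dotProduct_one v).trans hv.2)

theorem exists_mem_stdSimplex_vecMul_eq_self [Nonempty ι] {M : (ι → ℝ) → Matrix ι ι ℝ}
    (hM : ContinuousOn M (stdSimplex ℝ ι))
    (hstoch : Set.MapsTo M (stdSimplex ℝ ι) (rowStochastic ℝ ι)) :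
    ∃ x ∈ stdSimplex ℝ ι, x ᵥ* M x = x :=
  exists_mem_stdSimplex_isFixedPt (F := fun x ↦ x ᵥ* M x)
    (continuousOn_iff_continuous_domRestrict.2
      (continuous_subtype_val.matrix_vecMul hM.domRestrict))
    fun _ hx ↦ vecMul_mem_stdSimplex (hstoch hx) hx

end Stochastic

section Irreducible

variable {ι R : Type*} [Ring R] [LinearOrder R] {A B : Matrix ι ι R}

theorem exists_apply_pos_of_isIrreducible (hA : A.IsIrreducible) (i : ι) : ∃ j, 0 < A i j := by
  obtain ⟨p, hp⟩ := hA.transpose.connected i i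
  cases p with
  | nil => exact absurd hp (lt_irrefl 0)
  | cons _ edge => exact ⟨_, edge.down⟩

theorem isIrreducible_of_forall_pos_iff (hA : A.IsIrreducible) (hB : ∀ i j, 0 ≤ B i j)
    (h : ∀ i j, 0 < B i j ↔ 0 < A i j) : B.IsIrreducible := by
  have : B.toQuiver = A.toQuiver :=
    congrArg Quiver.mk (funext₂ fun i j ↦ congrArg PLift (propext (h i j)))
  exact ⟨hB, this ▸ hA.connected⟩

theorem pos_of_vecMul_eq_self [IsStrictOrderedRing R] [Fintype ι] (hA : A.IsIrreducible)
    {v : ι → R} (hv : 0 < v) (hfix : v ᵥ* A = v) (j : ι) : 0 < v j := by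
  classical
  have hpow (k : ℕ) : v ᵥ* A ^ k = v := by
    induction k with
    | zero => rw [pow_zero, vecMul_one]
    | succ k ih => rw [pow_succ, ← vecMul_vecMul, ih, hfix]
  obtain ⟨hv₀, i, hi⟩ := Pi.lt_def.1 hv
  obtain ⟨k, -, hk⟩ := (isIrreducible_iff_exists_pow_pos hA.nonneg).1 hA i j
  rw [← hpow k]
  exact Finset.sum_pos' (fun l _ ↦ mul_nonneg (hv₀ l) (pow_apply_nonneg hA.nonneg k l j))
    ⟨i, Finset.mem_univ i, mul_pos hi hk⟩

end Irreducible

section Mg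

variable {n : ℕ} {C : Matrix (Fin n) (Fin n) ℝ} {g : ℝ → ℝ} {x : Fin n → ℝ}

theorem IsIrred.isIrreducible (hC : IsIrred C) (hC0 : ∀ i j, 0 ≤ C i j) : C.IsIrreducible :=
  (isIrreducible_iff_exists_pow_pos hC0).2 hC

theorem sum_mul_weight_pos (hC0 : ∀ i j, 0 ≤ C i j) (hrow : ∀ i, ∃ j, 0 < C i j)
    (hg : ∀ j, 0 < g (x j)) (i : Fin n) : 0 < ∑ k, C i k * g (x k) := by
  obtain ⟨j, hj⟩ := hrow i
  exact Finset.sum_pos' (fun k _ ↦ mul_nonneg (hC0 i k) (hg k).le)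
    ⟨j, Finset.mem_univ j, mul_pos hj (hg j)⟩

theorem Mg_mem_rowStochastic (hC0 : ∀ i j, 0 ≤ C i j) (hrow : ∀ i, ∃ j, 0 < C i j)
    (hg : ∀ j, 0 < g (x j)) : Mg C g x ∈ rowStochastic ℝ (Fin n) := by
  have hsum := sum_mul_weight_pos hC0 hrow hg
  refine mem_rowStochastic_iff_sum.2 ⟨fun i j ↦ ?_, fun i ↦ ?_⟩
  · exact div_nonneg (mul_nonneg (hC0 i j) (hg j).le) (hsum i).le
  · simp only [Mg, of_apply]
    rw [← Finset.sum_div, div_self (hsum i).ne']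

theorem isIrreducible_Mg (hC : C.IsIrreducible) (hg : ∀ j, 0 < g (x j)) :
    (Mg C g x).IsIrreducible := by
  have hrow := exists_apply_pos_of_isIrreducible hC
  refine isIrreducible_of_forall_pos_iff hC (Mg_mem_rowStochastic hC.nonneg hrow hg).1 fun i j ↦ ?_
  rw [Mg, of_apply, div_pos_iff_of_pos_right (sum_mul_weight_pos hC.nonneg hrow hg i),
    mul_pos_iff_of_pos_right (hg j)]

theorem continuousOn_Mg {s : Set (Fin n → ℝ)} (hC0 : ∀ i j, 0 ≤ C i j)
    (hrow : ∀ i, ∃ j, 0 < C i j) (hgpos : ∀ x ∈ s, ∀ j, 0 < g (x j))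
    (hgcont : ∀ j, ContinuousOn (fun x ↦ g (x j)) s) : ContinuousOn (Mg C g) s := by
  refine continuousOn_pi.2 fun i ↦ continuousOn_pi.2 fun j ↦ ?_
  exact (continuousOn_const.mul (hgcont j)).div
    (continuousOn_finsetSum _ fun k _ ↦ continuousOn_const.mul (hgcont k))
    fun x hx ↦ (sum_mul_weight_pos hC0 hrow (hgpos x hx) i).ne'

end Mg

theorem uT_has_fixed_point_in_interior_general
    (n : ℕ) (hn : 0 < n) (C : Matrix (Fin n) (Fin n) ℝ)
    (hC0 : ∀ i j, 0 ≤ C i j) (hCirr : IsIrred C)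
    (g : ℝ → ℝ) (hgcont : ContinuousOn g (Set.Icc (0 : ℝ) 1))
    (hgpos : ∀ x ∈ Set.Icc (0 : ℝ) 1, 0 < g x)
    (u : (Fin n → ℝ) → (Fin n → ℝ))
    (hu : ∀ x ∈ stdSimplex ℝ (Fin n), u x ∈ stdSimplex ℝ (Fin n) ∧
      Matrix.vecMul (u x) (Mg C g x) = u x ∧
      ∀ v ∈ stdSimplex ℝ (Fin n), Matrix.vecMul v (Mg C g x) = v → v = u x) :
    (∃ x ∈ stdSimplex ℝ (Fin n), (∀ i, 0 < x i) ∧ u x = x) ∧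
    (∀ x ∈ stdSimplex ℝ (Fin n), u x = x → ∀ i, 0 < x i) := by
  have hC := hCirr.isIrreducible hC0
  have hrow := exists_apply_pos_of_isIrreducible hC
  have hweight : ∀ x ∈ stdSimplex ℝ (Fin n), ∀ j, 0 < g (x j) :=
    fun x hx j ↦ hgpos _ (mem_Icc_of_mem_stdSimplex hx j)
  have hinterior : ∀ x ∈ stdSimplex ℝ (Fin n), x ᵥ* Mg C g x = x → ∀ i, 0 < x i := by
    intro x hx hfix
    have hx₀ : x ≠ 0 := by
      rintro rfl
      simpa using hx.2
    exact pos_of_vecMul_eq_self (isIrreducible_Mg hC (hweight x hx))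
      (lt_of_le_of_ne hx.1 hx₀.symm) hfix
  have : Nonempty (Fin n) := Fin.pos_iff_nonempty.1 hn
  obtain ⟨x, hx, hfix⟩ := exists_mem_stdSimplex_vecMul_eq_self
    (continuousOn_Mg hC0 hrow hweight fun j ↦ hgcont.comp (continuous_apply j).continuousOn
      fun _ hx ↦ mem_Icc_of_mem_stdSimplex hx j)
    fun x hx ↦ Mg_mem_rowStochastic hC0 hrow (hweight x hx)
  refine ⟨⟨x, hx, hinterior x hx hfix, ((hu x hx).2.2 x hx hfix).symm⟩, fun y hy hy_fix ↦ ?_⟩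
  exact hinterior y hy (by simpa only [hy_fix] using (hu y hy).2.1)

theorem uT_has_fixed_point_in_interior
    (n : ℕ) (hn : 0 < n) (C : Matrix (Fin n) (Fin n) ℝ)
    (hC0 : ∀ i j, 0 ≤ C i j) (hCirr : IsIrred C)
    (g g' : ℝ → ℝ) (hg : IsAdmissible g g')
    (u : (Fin n → ℝ) → (Fin n → ℝ))
    (hu : ∀ x ∈ stdSimplex ℝ (Fin n), u x ∈ stdSimplex ℝ (Fin n) ∧
      Matrix.vecMul (u x) (Mg C g x) = u x ∧
      ∀ v ∈ stdSimplex ℝ (Fin n), Matrix.vecMul v (Mg C g x) = v → v = u x) :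
    (∃ x ∈ stdSimplex ℝ (Fin n), (∀ i, 0 < x i) ∧ u x = x) ∧
    (∀ x ∈ stdSimplex ℝ (Fin n), u x = x → ∀ i, 0 < x i) :=
  uT_has_fixed_point_in_interior_general n hn C hC0 hCirr g
    (fun x hx ↦ (hg.1 x hx).continuousWithinAt) hg.2.2.2.1 u hu
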